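/- In S̄ = S/(m_{(a,b)} : a ≠ b), for any k > 0 and partition λ, the product m̄_{(k,k)} · m̄_{(λ,0)(0,1)^{|λ|}} lies in the linear span of { m̄_{(ν,0)(0,1)^{|ν|}} : ν a partition with ℓ(ν)+|ν| ≥ ℓ(λ)+|λ| }. -/

import Mathlib

/-- The monomial MacMahon symmetric function `m_Λ` attached to a bipartite partition
`Λ` (a multiset of vectors in `ℕ×ℕ`), as a formal power series in two families of
variables `xᵢ = X (i,0)`, `yᵢ = X (i,1)`: the sum, with coefficients `0` or `1`, of all
monomials whose multiset of exponent pairs equals `Λ`. -/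
noncomputable def mm (Λ : Multiset (ℕ × ℕ)) : MvPowerSeries (ℕ × Fin 2) ℂ :=
  fun d => if (d.support.image Prod.fst).val.map
      (fun i => (d (i, 0), d (i, 1))) = Λ then 1 else 0

/-- The bipartite partition `(λ,0)(0,1)^{|λ|}` attached to an ordinary partition `λ`. -/
noncomputable def bip (l : Multiset ℕ) : Multiset (ℕ × ℕ) :=
  l.map (fun i => (i, 0)) + Multiset.replicate l.sum (0, 1)

/-- The ideal of `S` generated by the `m_{(a,b)}` with `a ≠ b`, as a `ℂ`-submodule:
the span of the products `m_{(a,b)} · m_Λ`. -/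
noncomputable def Jbar : Submodule ℂ (MvPowerSeries (ℕ × Fin 2) ℂ) :=
  Submodule.span ℂ {x | ∃ (a b : ℕ) (Λ : Multiset (ℕ × ℕ)),
    a ≠ b ∧ (0, 0) ∉ Λ ∧ x = mm {(a, b)} * mm Λ}

/-!
Augmented monomial functions multiply by power sums `mm {v}` according to
`mm {v} * augMonomial L = augMonomial (v, L) + ∑ u ∈ L, augMonomial (u + v, L \ u)`.
Let `D` be the derivation with `D (mm {w}) = (w.1 - w.2) • mm {w + (k, k)}`. It maps every
`augMonomial L` into the ideal, because `w + (k, k)` has distinct entries whenever `w` has.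
Adding `D (augMonomial L)` to `mm {(k, k)} * augMonomial L`, where `L = (λ,0)(0,1)^{|λ|}`,
multiplies the term in which `(k, k)` merges with `u` by `1 + u.1 - u.2`, which vanishes for
`u = (0, 1)`. Besides parts `(i, 0)` and `(0, 1)`, the surviving terms contain a single part
`(r, t)` with `t ≤ r`. Since `mm {(r, t - 1)}` lies in the ideal, expanding its products lowers `t`
to `0` step by step. No step lowers the number of parts, which for `(ν,0)(0,1)^{|ν|}` is
`ℓ(ν) + |ν|`.
-/

namespace MacMahon

section Multiplicities

variable {α : Type*} [DecidableEq α]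

/-- The product of the factorials of the multiplicities of a multiset, which normalises the
augmented monomial functions. -/
def multiplicityFactorial (L : Multiset α) : ℕ :=
  ∏ u ∈ L.toFinset, (L.count u).factorial

lemma multiplicityFactorial_ne_zero (L : Multiset α) : multiplicityFactorial L ≠ 0 :=
  Finset.prod_ne_zero_iff.2 fun _ _ => Nat.factorial_ne_zero _

lemma multiplicityFactorial_cons (a : α) (L : Multiset α) :
    multiplicityFactorial (a ::ₘ L) = (a ::ₘ L).count a * multiplicityFactorial L := by
  have extend : multiplicityFactorial L = ∏ u ∈ (a ::ₘ L).toFinset, (L.count u).factorial :=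
    Finset.prod_subset (by simp) fun u _ hu => by
      simp [Multiset.count_eq_zero_of_notMem (mt Multiset.mem_toFinset.2 hu)]
  have ha : a ∈ (a ::ₘ L).toFinset := by simp
  rw [extend, multiplicityFactorial, ← Finset.mul_prod_erase _ _ ha,
    ← Finset.mul_prod_erase _ _ ha, ← mul_assoc, Multiset.count_cons_self, Nat.factorial_succ]
  congr 1
  exact Finset.prod_congr rfl fun u hu => by
    rw [Multiset.count_cons_of_ne (Finset.ne_of_mem_erase hu)]

end Multiplicities

section NonzeroValues

variable {σ M : Type*}

section Zero

variable [Zero M]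

/-- The multiset of nonzero values of a finitely supported function: the bipartite partition of a
monomial whose exponent pairs are recorded by the function. -/
def nonzeroValues (e : σ →₀ M) : Multiset M :=
  e.support.val.map e

lemma nonzeroValues_eq_zero {e : σ →₀ M} : nonzeroValues e = 0 ↔ e = 0 := by
  simp [nonzeroValues]

lemma nonzeroValues_eq_cons_erase {e : σ →₀ M} {i : σ} (hi : e i ≠ 0) :
    nonzeroValues e = e i ::ₘ nonzeroValues (e.erase i) := by
  classical
  have hi' : i ∈ e.support.val := Finsupp.mem_support_iff.2 hi
  rw [nonzeroValues, nonzeroValues, Finsupp.support_erase, Finset.erase_val,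
    ← Multiset.cons_erase hi', Multiset.map_cons, Multiset.erase_cons_head]
  congr 1
  refine Multiset.map_congr rfl fun j hj => (Finsupp.erase_ne ?_).symm
  exact Finset.ne_of_mem_erase (s := e.support) hj

lemma nonzeroValues_eq_singleton {e : σ →₀ M} {v : M} (hv : v ≠ 0) :
    nonzeroValues e = {v} ↔ ∃ i, e = Finsupp.single i v := by
  classical
  refine ⟨fun h => ?_, ?_⟩
  · obtain ⟨i, -, rfl⟩ : ∃ i ∈ e.support.val, e i = v :=
      Multiset.mem_map.1 (Multiset.singleton_le.1 h.ge)
    rw [nonzeroValues_eq_cons_erase hv, ← Multiset.cons_zero, Multiset.cons_inj_right,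
      nonzeroValues_eq_zero] at h
    refine ⟨i, Finsupp.ext fun j => ?_⟩
    rcases eq_or_ne j i with rfl | hj
    · rw [Finsupp.single_eq_same]
    · rw [Finsupp.single_eq_of_ne hj, ← Finsupp.erase_ne hj, h, Finsupp.zero_apply]
  · rintro ⟨i, rfl⟩
    simp [nonzeroValues, Finsupp.support_single, hv]

variable [DecidableEq M]

lemma count_nonzeroValues (e : σ →₀ M) (a : M) :
    (nonzeroValues e).count a = {i ∈ e.support | e i = a}.card := by
  simp only [nonzeroValues, Multiset.count_map, Finset.card_def, Finset.filter_val, eq_comm]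

/-- The coefficient, at the monomial with exponents `e`, of the augmented monomial function
of `L`. -/
def augCoeff (L : Multiset M) (e : σ →₀ M) : ℕ :=
  if nonzeroValues e = L then multiplicityFactorial L else 0

lemma augCoeff_cons (a : M) (L : Multiset M) (e : σ →₀ M) :
    augCoeff (a ::ₘ L) e = ∑ i ∈ e.support with e i = a, augCoeff L (e.erase i) := by
  have summand : ∀ i ∈ e.support.filter (e · = a), augCoeff L (e.erase i) =
      if nonzeroValues e = a ::ₘ L then multiplicityFactorial L else 0 := by
    intro i hi
    obtain ⟨hmem, rfl⟩ := Finset.mem_filter.1 hi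
    rw [augCoeff, nonzeroValues_eq_cons_erase (Finsupp.mem_support_iff.1 hmem)]
    simp only [Multiset.cons_inj_right]
  rw [Finset.sum_congr rfl summand, Finset.sum_const, smul_eq_mul, ← count_nonzeroValues, augCoeff,
    multiplicityFactorial_cons]
  split_ifs with h
  · rw [h]
  · rfl

lemma augCoeff_eq_sum_erase {L : Multiset M} (hL : (0 : M) ∉ L) (e : σ →₀ M) (i : σ) :
    augCoeff L e = (if e i = 0 then augCoeff L (e.erase i) else 0) +
      (L.map fun u => if e i = u then augCoeff (L.erase u) (e.erase i) else 0).sum := by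
  rw [Multiset.sum_map_eq_nsmul_single (e i) fun u hu _ => if_neg hu.symm, if_pos rfl, smul_eq_mul]
  by_cases hi : e i = 0
  · rw [if_pos hi, hi, Multiset.count_eq_zero_of_notMem hL, zero_mul, add_zero,
      Finsupp.erase_of_notMem_support (by simpa using hi)]
  rw [if_neg hi, zero_add, augCoeff, augCoeff, nonzeroValues_eq_cons_erase hi]
  by_cases hmem : e i ∈ L
  · obtain ⟨L, rfl⟩ := Multiset.exists_cons_of_mem hmem
    simp only [Multiset.cons_inj_right, Multiset.erase_cons_head, multiplicityFactorial_cons,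
      mul_ite, mul_zero]
  · rw [Multiset.count_eq_zero_of_notMem hmem, zero_mul, if_neg]
    rintro rfl
    exact hmem (Multiset.mem_cons_self _ _)

end Zero

lemma sum_augCoeff_tsub [AddCommMonoid M] [PartialOrder M] [IsOrderedCancelAddMonoid M]
    [CanonicallyOrderedAdd M] [Sub M] [OrderedSub M] [DecidableEq M] [DecidableLE M]
    {L : Multiset M} (hL : (0 : M) ∉ L) (v : M) (e : σ →₀ M) :
    ∑ i ∈ e.support with v ≤ e i, augCoeff L (e - Finsupp.single i v) =
      augCoeff (v ::ₘ L) e + (L.map fun u => augCoeff ((u + v) ::ₘ L.erase u) e).sum := by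
  have summand (i : σ) : (if v ≤ e i then augCoeff L (e - Finsupp.single i v) else 0) =
      (if e i = v then augCoeff L (e.erase i) else 0) +
        (L.map fun u => if e i = u + v then augCoeff (L.erase u) (e.erase i) else 0).sum := by
    by_cases hv : v ≤ e i
    · obtain ⟨w, hw⟩ := exists_add_of_le hv
      have value : (e - Finsupp.single i v) i = w := by
        rw [Finsupp.tsub_apply, Finsupp.single_eq_same, hw, add_tsub_cancel_left]
      have rest : (e - Finsupp.single i v).erase i = e.erase i := by
        ext j
        rcases eq_or_ne j i with rfl | hj <;> simp [*]
      rw [if_pos hv, augCoeff_eq_sum_erase hL _ i, value, rest, hw]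
      simp only [add_comm _ v, add_right_inj, add_eq_left]
    · have h (u : M) : e i ≠ u + v := fun h => hv (h ▸ le_add_self)
      rw [if_neg hv, if_neg fun h => hv h.ge]
      simp [h]
  simp only [augCoeff_cons, Finset.sum_filter, summand, Finset.sum_add_distrib]
  exact congrArg _ (Multiset.sum_map_sum_map _ _)

end NonzeroValues

section AugmentedMonomials

/-- The identification of the exponent of a monomial in the variables `xᵢ`, `yᵢ` with the finitely
supported family of its exponent pairs. -/
noncomputable def exponentPairs : (ℕ × Fin 2 →₀ ℕ) ≃+ (ℕ →₀ ℕ × ℕ) :=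
  Finsupp.curryAddEquiv.trans <| Finsupp.mapRange.addEquiv
    { finTwoArrowEquiv' ℕ with map_add' := fun _ _ => rfl }

lemma coeff_mm (L : Multiset (ℕ × ℕ)) (d : ℕ × Fin 2 →₀ ℕ) :
    MvPowerSeries.coeff d (mm L) = if nonzeroValues (exponentPairs d) = L then 1 else 0 := by
  have support : (exponentPairs d).support = d.support.image Prod.fst := by
    rw [← Finsupp.support_curry]
    exact Finsupp.support_mapRange_of_injective rfl _ (finTwoArrowEquiv' ℕ).injective
  rw [nonzeroValues, support]
  rfl

lemma coeff_mm_singleton_mul {v : ℕ × ℕ} (hv : v ≠ 0) (f : MvPowerSeries (ℕ × Fin 2) ℂ)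
    (e : ℕ →₀ ℕ × ℕ) :
    MvPowerSeries.coeff (exponentPairs.symm e) (mm {v} * f) =
      ∑ i ∈ e.support with v ≤ e i,
        MvPowerSeries.coeff (exponentPairs.symm (e - Finsupp.single i v)) f := by
  classical
  rw [MvPowerSeries.coeff_mul]
  refine (Finset.sum_of_injOn (fun i => (exponentPairs.symm (Finsupp.single i v),
    exponentPairs.symm (e - Finsupp.single i v))) ?_ ?_ ?_ ?_).symm
  · intro i _ j _ h
    exact Finsupp.single_left_injective hv (exponentPairs.symm.injective (congrArg Prod.fst h))
  · intro i hi
    have hvi : Finsupp.single i v ≤ e := Finsupp.single_le_iff.2 (Finset.mem_filter.1 hi).2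
    simp only [Finset.mem_coe, Finset.HasAntidiagonal.mem_antidiagonal, ← map_add,
      add_tsub_cancel_of_le hvi]
  · rintro ⟨a, b⟩ hab hne
    rw [coeff_mm, if_neg, zero_mul]
    rw [nonzeroValues_eq_singleton hv]
    rintro ⟨i, hi⟩
    have hsum : Finsupp.single i v + exponentPairs b = e := by
      rw [← hi, ← map_add, Finset.HasAntidiagonal.mem_antidiagonal.1 hab, AddEquiv.apply_symm_apply]
    refine hne ⟨i, ?_, ?_⟩
    · simp [← hsum, hv]
    · simp [← hsum, ← hi]
  · intro i _
    rw [coeff_mm, AddEquiv.apply_symm_apply,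
      if_pos ((nonzeroValues_eq_singleton hv).2 ⟨i, rfl⟩), one_mul]

/-- The augmented monomial function of `L`: the sum of the monomials `∏ x_{σ u}^{u.1} y_{σ u}^{u.2}`
(product over the parts `u` of `L`) over all injections `σ` of these parts into the indices. -/
noncomputable def augMonomial (L : Multiset (ℕ × ℕ)) : MvPowerSeries (ℕ × Fin 2) ℂ :=
  (multiplicityFactorial L : ℂ) • mm L

lemma mm_eq_smul_augMonomial (L : Multiset (ℕ × ℕ)) :
    mm L = (multiplicityFactorial L : ℂ)⁻¹ • augMonomial L :=
  (inv_smul_smul₀ (Nat.cast_ne_zero.2 (multiplicityFactorial_ne_zero L)) _).symm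

lemma coeff_augMonomial (L : Multiset (ℕ × ℕ)) (e : ℕ →₀ ℕ × ℕ) :
    MvPowerSeries.coeff (exponentPairs.symm e) (augMonomial L) = augCoeff L e := by
  rw [augMonomial, map_smul, coeff_mm, AddEquiv.apply_symm_apply, augCoeff]
  split_ifs <;> simp

lemma mm_singleton_mul_augMonomial {v : ℕ × ℕ} (hv : v ≠ 0) {L : Multiset (ℕ × ℕ)}
    (hL : (0 : ℕ × ℕ) ∉ L) :
    mm {v} * augMonomial L =
      augMonomial (v ::ₘ L) + (L.map fun u => augMonomial ((u + v) ::ₘ L.erase u)).sum := by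
  ext d
  obtain ⟨e, rfl⟩ := exponentPairs.symm.surjective d
  simp only [coeff_mm_singleton_mul hv, coeff_augMonomial, map_add, map_multiset_sum,
    Multiset.map_map, Function.comp_def]
  simpa only [Nat.cast_sum, Nat.cast_add, Nat.cast_multiset_sum, Multiset.map_map,
    Function.comp_def] using congrArg (Nat.cast : ℕ → ℂ) (sum_augCoeff_tsub hL v e)

end AugmentedMonomials

section SumsOverParts

variable {α β : Type*} [DecidableEq α] [AddCommMonoid β]

lemma sum_map_cons_erase (a : α) (L : Multiset α) (F : α → Multiset α → β) :
    ((a ::ₘ L).map fun u => F u ((a ::ₘ L).erase u)).sum =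
      F a L + (L.map fun u => F u (a ::ₘ L.erase u)).sum := by
  rw [Multiset.map_cons, Multiset.sum_cons, Multiset.erase_cons_head]
  congr 2
  exact Multiset.map_congr rfl fun u hu => by rw [Multiset.erase_cons_tail_of_mem hu]

lemma sum_map_sum_map_erase_comm (L : Multiset α) (F : α → α → β) :
    (L.map fun u => ((L.erase u).map (F u)).sum).sum =
      (L.map fun u => ((L.erase u).map fun w => F w u).sum).sum := by
  induction L using Multiset.induction with
  | empty => rfl
  | cons a L ih =>
    have expand (F : α → α → β) :
        ((a ::ₘ L).map fun u => (((a ::ₘ L).erase u).map (F u)).sum).sum =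
          (L.map (F a)).sum + ((L.map fun u => F u a).sum +
            (L.map fun u => ((L.erase u).map (F u)).sum).sum) := by
      rw [sum_map_cons_erase a L fun u E => (E.map (F u)).sum]
      simp only [Multiset.map_cons, Multiset.sum_cons, Multiset.sum_map_add]
    rw [expand, expand fun u w => F w u, ih, add_left_comm]

end SumsOverParts

section ShiftDerivation

variable {w : ℕ × ℕ} {L : Multiset (ℕ × ℕ)}

lemma zero_notMem_cons (hw : w ≠ 0) (hL : (0 : ℕ × ℕ) ∉ L) : (0 : ℕ × ℕ) ∉ w ::ₘ L := by
  rw [Multiset.mem_cons, not_or]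
  exact ⟨hw.symm, hL⟩

lemma zero_notMem_cons_add_erase (hL : (0 : ℕ × ℕ) ∉ L) (hw : w ≠ 0) (u : ℕ × ℕ) :
    (0 : ℕ × ℕ) ∉ (u + w) ::ₘ L.erase u :=
  zero_notMem_cons (fun h => hw (add_eq_zero.1 h).2) (mt Multiset.mem_of_mem_erase hL)

/-- The image of `augMonomial L` under the derivation of the ring of MacMahon symmetric functions
sending each power sum `mm {w}` to `c w • mm {w + v}`. -/
noncomputable def shiftDerivation (c : ℕ × ℕ →+ ℂ) (v : ℕ × ℕ) (L : Multiset (ℕ × ℕ)) :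
    MvPowerSeries (ℕ × Fin 2) ℂ :=
  (L.map fun u => c u • augMonomial ((u + v) ::ₘ L.erase u)).sum

lemma shiftDerivation_cons_eq_add_sum (c : ℕ × ℕ →+ ℂ) (v w : ℕ × ℕ) (L : Multiset (ℕ × ℕ)) :
    shiftDerivation c v (w ::ₘ L) = c w • augMonomial ((w + v) ::ₘ L) +
      (L.map fun u => c u • augMonomial ((u + v) ::ₘ w ::ₘ L.erase u)).sum :=
  sum_map_cons_erase w L fun u E => c u • augMonomial ((u + v) ::ₘ E)

lemma mm_singleton_mul_shiftDerivation (c : ℕ × ℕ →+ ℂ) (v : ℕ × ℕ) (hw : w ≠ 0)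
    (hL : (0 : ℕ × ℕ) ∉ L) :
    mm {w} * shiftDerivation c v L =
      (L.map fun u => c u • augMonomial ((u + v) ::ₘ w ::ₘ L.erase u)).sum +
      ((L.map fun u => c u • augMonomial ((u + (w + v)) ::ₘ L.erase u)).sum +
      (L.map fun u => ((L.erase u).map fun t =>
        c u • augMonomial ((t + w) ::ₘ (u + v) ::ₘ (L.erase u).erase t)).sum).sum) := by
  have summand {u : ℕ × ℕ} (hu : u ∈ L) : mm {w} * augMonomial ((u + v) ::ₘ L.erase u) =
      augMonomial ((u + v) ::ₘ w ::ₘ L.erase u) +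
        (augMonomial ((u + (w + v)) ::ₘ L.erase u) + ((L.erase u).map fun t =>
          augMonomial ((t + w) ::ₘ (u + v) ::ₘ (L.erase u).erase t)).sum) := by
    have hu0 : u + v ≠ 0 := fun h => ne_of_mem_of_not_mem hu hL (add_eq_zero.1 h).1
    rw [mm_singleton_mul_augMonomial hw (zero_notMem_cons hu0 (mt Multiset.mem_of_mem_erase hL)),
      sum_map_cons_erase (u + v) _ fun t E => augMonomial ((t + w) ::ₘ E), Multiset.cons_swap,
      add_assoc u v w, add_comm v w]
  rw [shiftDerivation, ← Multiset.sum_map_mul_left, ← Multiset.sum_map_add, ← Multiset.sum_map_add]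
  refine congrArg _ (Multiset.map_congr rfl fun u hu => ?_)
  rw [mul_smul_comm, summand hu, smul_add, smul_add, Multiset.smul_sum, Multiset.map_map]
  rfl

lemma sum_shiftDerivation_cons_add_erase (c : ℕ × ℕ →+ ℂ) (v w : ℕ × ℕ) (L : Multiset (ℕ × ℕ)) :
    (L.map fun u => shiftDerivation c v ((u + w) ::ₘ L.erase u)).sum =
      (L.map fun u => c u • augMonomial ((u + (w + v)) ::ₘ L.erase u)).sum +
      c w • (L.map fun u => augMonomial ((u + (w + v)) ::ₘ L.erase u)).sum +
      (L.map fun u => ((L.erase u).map fun t =>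
        c u • augMonomial ((t + w) ::ₘ (u + v) ::ₘ (L.erase u).erase t)).sum).sum := by
  rw [sum_map_sum_map_erase_comm]
  simp only [shiftDerivation_cons_eq_add_sum, map_add, add_smul, add_assoc, Multiset.sum_map_add,
    Multiset.smul_sum, Multiset.map_map, Function.comp_def, Multiset.erase_comm,
    Multiset.cons_swap]

/-- The Leibniz rule for `mm {w} * augMonomial L`, with the product expanded on one side only. -/
lemma shiftDerivation_cons (c : ℕ × ℕ →+ ℂ) (v : ℕ × ℕ) (hw : w ≠ 0) (hL : (0 : ℕ × ℕ) ∉ L) :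
    shiftDerivation c v (w ::ₘ L) =
      c w • (mm {w + v} * augMonomial L) + mm {w} * shiftDerivation c v L -
        (L.map fun u => shiftDerivation c v ((u + w) ::ₘ L.erase u)).sum := by
  have hwv : w + v ≠ 0 := fun h => hw (add_eq_zero.1 h).1
  rw [shiftDerivation_cons_eq_add_sum, mm_singleton_mul_augMonomial hwv hL,
    mm_singleton_mul_shiftDerivation c v hw hL, sum_shiftDerivation_cons_add_erase, smul_add]
  abel

end ShiftDerivation

section Ideal

variable {v w : ℕ × ℕ} {L : Multiset (ℕ × ℕ)}

lemma mm_singleton_mul_augMonomial_mem_Jbar (hv : v.1 ≠ v.2) (hL : (0 : ℕ × ℕ) ∉ L) :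
    mm {v} * augMonomial L ∈ Jbar := by
  rw [augMonomial, mul_smul_comm]
  exact Submodule.smul_mem _ _ (Submodule.subset_span ⟨v.1, v.2, L, hv, hL, rfl⟩)

lemma mm_singleton_mul_mem_Jbar (hw : w ≠ 0) {x : MvPowerSeries (ℕ × Fin 2) ℂ} (hx : x ∈ Jbar) :
    mm {w} * x ∈ Jbar := by
  suffices h : Jbar ≤ Jbar.comap (LinearMap.mulLeft ℂ (mm {w})) from h hx
  refine Submodule.span_le.2 ?_
  rintro _ ⟨a, b, L, hab, hL, rfl⟩
  rw [SetLike.mem_coe, Submodule.mem_comap, LinearMap.mulLeft_apply, mul_left_comm,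
    mm_eq_smul_augMonomial L, mul_smul_comm, mul_smul_comm, mm_singleton_mul_augMonomial hw hL,
    mul_add, ← Multiset.sum_map_mul_left]
  refine Submodule.smul_mem _ _ (add_mem ?_ (multiset_sum_mem _ fun y hy => ?_))
  · exact mm_singleton_mul_augMonomial_mem_Jbar hab (zero_notMem_cons hw hL)
  · obtain ⟨u, -, rfl⟩ := Multiset.mem_map.1 hy
    exact mm_singleton_mul_augMonomial_mem_Jbar hab (zero_notMem_cons_add_erase hL hw u)

/-- The difference `a - b` of the two entries of `(a, b)`: the weight for which the shift derivation
kills the power sums `mm {(a, a)}`, the only ones that do not lie in `Jbar`. -/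
noncomputable def excess : ℕ × ℕ →+ ℂ :=
  (Nat.castAddMonoidHom ℂ).comp (AddMonoidHom.fst ℕ ℕ) -
    (Nat.castAddMonoidHom ℂ).comp (AddMonoidHom.snd ℕ ℕ)

lemma excess_eq_zero (hw : w.1 = w.2) : excess w = 0 := by
  simp [excess, hw]

lemma shiftDerivation_excess_mem_Jbar (hv : v.1 = v.2) (hL : (0 : ℕ × ℕ) ∉ L) :
    shiftDerivation excess v L ∈ Jbar := by
  induction hn : L.card generalizing L with
  | zero => simp [Multiset.card_eq_zero.1 hn, shiftDerivation]
  | succ n ih =>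
    obtain ⟨w, hwL⟩ := Multiset.card_pos_iff_exists_mem.1 (hn.symm ▸ n.succ_pos : 0 < L.card)
    obtain ⟨L, rfl⟩ := Multiset.exists_cons_of_mem hwL
    have hcard : L.card = n := by simpa using hn
    have hw : w ≠ 0 := fun h => hL (h ▸ Multiset.mem_cons_self w L)
    have hL' : (0 : ℕ × ℕ) ∉ L := mt Multiset.mem_cons_of_mem hL
    rw [shiftDerivation_cons excess v hw hL']
    refine sub_mem (add_mem ?_ (mm_singleton_mul_mem_Jbar hw (ih hL' hcard)))
      (multiset_sum_mem _ fun y hy => ?_)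
    · by_cases hc : w.1 = w.2
      · simp [excess_eq_zero hc]
      · exact Submodule.smul_mem _ _
          (mm_singleton_mul_augMonomial_mem_Jbar (by simpa [hv] using hc) hL')
    · obtain ⟨u, hu, rfl⟩ := Multiset.mem_map.1 hy
      refine ih (zero_notMem_cons_add_erase hL' hw u) ?_
      rw [Multiset.card_cons, Multiset.card_erase_add_one hu, hcard]

end Ideal

section PaddedPartitions

/-- The bipartite partition `(λ,0)(0,1)^n`, which is `bip λ` when `n = |λ|`. -/
def paddedBip (l : Multiset ℕ) (n : ℕ) : Multiset (ℕ × ℕ) :=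
  l.map (fun i => (i, 0)) + Multiset.replicate n (0, 1)

lemma zero_notMem_paddedBip {l : Multiset ℕ} (hl : 0 ∉ l) (n : ℕ) :
    (0 : ℕ × ℕ) ∉ paddedBip l n := by
  simp [paddedBip, Prod.ext_iff, Multiset.mem_replicate, hl]

lemma paddedBip_erase_left {l : Multiset ℕ} {i : ℕ} (hi : i ∈ l) (n : ℕ) :
    (paddedBip l n).erase (i, 0) = paddedBip (l.erase i) n := by
  rw [paddedBip, Multiset.erase_add_left_pos _ (Multiset.mem_map_of_mem (fun i => (i, 0)) hi),
    paddedBip, Multiset.map_erase_of_mem _ _ hi]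

lemma paddedBip_erase_right (l : Multiset ℕ) (n : ℕ) :
    (paddedBip l (n + 1)).erase (0, 1) = paddedBip l n := by
  rw [paddedBip, Multiset.replicate_succ, Multiset.add_cons, Multiset.erase_cons_head, paddedBip]

lemma sum_map_paddedBip_erase {β : Type*} [AddCommMonoid β] (l : Multiset ℕ) (n : ℕ)
    (F : ℕ × ℕ → Multiset (ℕ × ℕ) → β) :
    ((paddedBip l n).map fun u => F u ((paddedBip l n).erase u)).sum =
      (l.map fun i => F (i, 0) (paddedBip (l.erase i) n)).sum +
        n • F (0, 1) (paddedBip l (n - 1)) := by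
  have left : (l.map fun i => F (i, 0) ((paddedBip l n).erase (i, 0))) =
      l.map fun i => F (i, 0) (paddedBip (l.erase i) n) :=
    Multiset.map_congr rfl fun i hi => by rw [paddedBip_erase_left hi]
  have right : n • F (0, 1) ((paddedBip l n).erase (0, 1)) =
      n • F (0, 1) (paddedBip l (n - 1)) := by
    cases n with
    | zero => rw [zero_nsmul, zero_nsmul]
    | succ n => rw [paddedBip_erase_right, Nat.add_sub_cancel]
  rw [← left, ← right, ← Multiset.sum_replicate, ← Multiset.map_replicate
    (fun u => F u ((paddedBip l n).erase u)), ← Multiset.sum_add]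
  conv_lhs => rw [paddedBip, Multiset.map_add, Multiset.map_map]
  rfl

/-- The lift to the power series ring of the span, in the quotient by `Jbar`, of the `mm (bip ν)`
over partitions `ν` with `ℓ(ν) + |ν| ≥ m`. -/
noncomputable def bipSpan (m : ℕ) : Submodule ℂ (MvPowerSeries (ℕ × Fin 2) ℂ) :=
  Jbar ⊔ Submodule.span ℂ {x | ∃ ν : Multiset ℕ, (0 : ℕ) ∉ ν ∧
    m ≤ ν.card + ν.sum ∧ x = mm (bip ν)}

lemma bipSpan_antitone : Antitone bipSpan := by
  refine fun m n hmn => sup_le_sup_left (Submodule.span_mono ?_) _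
  rintro _ ⟨ν, h0, hν, rfl⟩
  exact ⟨ν, h0, hmn.trans hν, rfl⟩

lemma augMonomial_bip_mem_bipSpan {l : Multiset ℕ} (hl : 0 ∉ l) :
    augMonomial (bip l) ∈ bipSpan (l.card + l.sum) :=
  Submodule.smul_mem _ _ (Submodule.mem_sup_right (Submodule.subset_span ⟨l, hl, le_rfl, rfl⟩))

lemma mm_singleton_mul_augMonomial_paddedBip {l : Multiset ℕ} {r : ℕ} (hl : 0 ∉ l) (hr : 0 < r)
    (n t : ℕ) :
    mm {(r, t)} * augMonomial (paddedBip l (n + 1)) =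
      augMonomial ((r, t) ::ₘ paddedBip l (n + 1)) +
        ((l.map fun i => augMonomial ((i + r, t) ::ₘ paddedBip (l.erase i) (n + 1))).sum +
          (n + 1) • augMonomial ((r, t + 1) ::ₘ paddedBip l n)) := by
  have hrt : ((r, t) : ℕ × ℕ) ≠ 0 := by simp [hr.ne']
  rw [mm_singleton_mul_augMonomial hrt (zero_notMem_paddedBip hl (n + 1)),
    sum_map_paddedBip_erase l (n + 1) fun u E => augMonomial ((u + (r, t)) ::ₘ E)]
  simp only [Prod.mk_add_mk, zero_add, Nat.add_sub_cancel, add_comm 1 t]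

/-- For `t < r` the product `mm {(r, t)} * augMonomial (paddedBip l (n + 1))` lies in `Jbar`, and
its expansion trades the part `(r, t + 1)` for parts with second entry `t`. -/
lemma augMonomial_cons_paddedBip_mem_bipSpan {l : Multiset ℕ} {n r t : ℕ} (hl : 0 ∉ l)
    (hr : 0 < r) (htr : t ≤ r) (hsum : l.sum + r = n + t) :
    augMonomial ((r, t) ::ₘ paddedBip l n) ∈ bipSpan (l.card + 1 + n) := by
  induction t generalizing l n r with
  | zero =>
    have hbip : (r, 0) ::ₘ paddedBip l n = bip (r ::ₘ l) := by
      rw [paddedBip, bip, Multiset.map_cons, Multiset.sum_cons, Multiset.cons_add, add_comm r, hsum,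
        add_zero]
    have hrl : 0 ∉ r ::ₘ l := by simp [hl, hr.ne]
    rw [hbip]
    exact bipSpan_antitone (by simp only [Multiset.card_cons, Multiset.sum_cons]; omega)
      (augMonomial_bip_mem_bipSpan hrl)
  | succ t ih =>
    have product_mem : mm {(r, t)} * augMonomial (paddedBip l (n + 1)) ∈ bipSpan (l.card + 1 + n) :=
      Submodule.mem_sup_left (mm_singleton_mul_augMonomial_mem_Jbar
        (Nat.lt_of_succ_le htr).ne' (zero_notMem_paddedBip hl (n + 1)))
    have adjoined_mem : augMonomial ((r, t) ::ₘ paddedBip l (n + 1)) ∈ bipSpan (l.card + 1 + n) :=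
      bipSpan_antitone (by omega) (ih hl hr (by omega) (by omega))
    have merged_mem : (l.map fun i =>
        augMonomial ((i + r, t) ::ₘ paddedBip (l.erase i) (n + 1))).sum ∈
          bipSpan (l.card + 1 + n) := by
      refine multiset_sum_mem _ fun y hy => ?_
      obtain ⟨i, hi, rfl⟩ := Multiset.mem_map.1 hy
      have hcard := Multiset.card_erase_add_one hi
      have hsum_erase := Multiset.sum_erase hi
      exact bipSpan_antitone (by omega)
        (ih (mt Multiset.mem_of_mem_erase hl) (by omega) (by omega) (by omega))
    have multiple_mem : (n + 1) • augMonomial ((r, t + 1) ::ₘ paddedBip l n) ∈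
        bipSpan (l.card + 1 + n) := by
      rwa [mm_singleton_mul_augMonomial_paddedBip hl hr,
        Submodule.add_mem_iff_right _ adjoined_mem,
        Submodule.add_mem_iff_right _ merged_mem] at product_mem
    rw [← Nat.cast_smul_eq_nsmul ℂ] at multiple_mem
    exact (Submodule.smul_mem_iff _ (Nat.cast_ne_zero.2 n.succ_ne_zero)).1 multiple_mem

lemma mm_singleton_mul_augMonomial_add_shiftDerivation {k : ℕ} (hk : 0 < k) {l : Multiset ℕ}
    (hl : 0 ∉ l) (n : ℕ) :
    mm {(k, k)} * augMonomial (paddedBip l n) + shiftDerivation excess (k, k) (paddedBip l n) =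
      augMonomial ((k, k) ::ₘ paddedBip l n) + (l.map fun i =>
        (1 + excess (i, 0)) • augMonomial ((i + k, k) ::ₘ paddedBip (l.erase i) n)).sum := by
  have hkk : ((k, k) : ℕ × ℕ) ≠ 0 := by simp [hk.ne']
  have cancel : 1 + excess (0, 1) = 0 := by simp [excess]
  have merge := sum_map_paddedBip_erase l n fun u E =>
    (1 + excess u) • augMonomial ((u + (k, k)) ::ₘ E)
  rw [cancel, zero_smul, smul_zero, add_zero] at merge
  simp only [Prod.mk_add_mk, zero_add] at merge
  rw [← merge, mm_singleton_mul_augMonomial hkk (zero_notMem_paddedBip hl n), shiftDerivation,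
    add_assoc, ← Multiset.sum_map_add]
  simp only [add_smul, one_smul]

end PaddedPartitions

end MacMahon

open MacMahon

/-- In `S̄`, the product `m̄_{(k,k)} m̄_{(λ,0)(0,1)^{|λ|}}` lies in the span of the
`m̄_{(ν,0)(0,1)^{|ν|}}` over partitions `ν` with `ℓ(ν)+|ν| ≥ ℓ(λ)+|λ|`. -/
theorem stmt15 (k : ℕ) (hk : 0 < k) (lam : Multiset ℕ) (h0 : (0 : ℕ) ∉ lam) :
    mm {((k : ℕ), (k : ℕ))} * mm (bip lam) ∈
      Jbar ⊔ Submodule.span ℂ {x | ∃ ν : Multiset ℕ, (0 : ℕ) ∉ ν ∧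
        lam.card + lam.sum ≤ ν.card + ν.sum ∧ x = mm (bip ν)} := by
  change mm {(k, k)} * mm (paddedBip lam lam.sum) ∈ bipSpan (lam.card + lam.sum)
  rw [mm_eq_smul_augMonomial (paddedBip lam lam.sum), mul_smul_comm]
  refine Submodule.smul_mem _ _ ?_
  have deriv_mem : shiftDerivation excess (k, k) (paddedBip lam lam.sum) ∈
      bipSpan (lam.card + lam.sum) :=
    Submodule.mem_sup_left (shiftDerivation_excess_mem_Jbar rfl (zero_notMem_paddedBip h0 _))
  rw [← Submodule.add_mem_iff_left _ deriv_mem,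
    mm_singleton_mul_augMonomial_add_shiftDerivation hk h0]
  refine add_mem ?_ (multiset_sum_mem _ fun y hy => ?_)
  · exact bipSpan_antitone (by omega)
      (augMonomial_cons_paddedBip_mem_bipSpan h0 hk le_rfl rfl)
  · obtain ⟨i, hi, rfl⟩ := Multiset.mem_map.1 hy
    have hcard := Multiset.card_erase_add_one hi
    have hsum_erase := Multiset.sum_erase hi
    exact Submodule.smul_mem _ _ (bipSpan_antitone (by omega)
      (augMonomial_cons_paddedBip_mem_bipSpan (mt Multiset.mem_of_mem_erase h0) (by omega)
        (by omega) (by omega)))
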